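/- arXiv:1410.3260 — 4 statements merged into one kernel-verified Lean document; each statement's English description precedes it below -/
import Mathlib

section
/- For every s, q, and ℓ there exists a number D = D(s,q,ℓ) such that every graph containing an ℓ-dense D-rake as a (not necessarily induced) subgraph contains either a canonical graph of order at least s as an induced subgraph, or the complete bipartite graph K_{q,q} as a (not necessarily induced) subgraph. -/
/-!
The theorem holds because long paths contain long chordless paths (Galvin, Rival and Sands), and a
chordless path drawn from the base of a dense rake keeps a dense supply of teeth.

The Ramsey input is `anticomplete_pieces`: if bounded-size pieces are attached to the pairs of a long
sequence of indices, then, without `K_{q,q}`, the pieces of successive pairs become anticomplete on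
a long subsequence. It is used twice.

* `exists_long_indPath`: if all chordless paths on the base are short, any two base vertices are
  joined by a short piece inside the interval between them. Along a sequence in which pieces that
  are not consecutive are anticomplete, a geodesic through the union of the pieces is a long
  chordless path, a contradiction.
* Let `u` be a long chordless path on base vertices. Following the base from a vertex of `u`, one
  either leaves `u` within `ℓ` steps, or stays on `u` until a root of the rake; hence `u` has
  distinct teeth rooted close to each of its vertices (`exists_teeth`). Cut `u` into windows, each
  with a tooth, and take three windows that are anticomplete together with their teeth. The
  neighbours on `u` of the first and of the third tooth avoid the middle window, so either one of
  them skips it, closing a long hole (`hole_of_gap`), or all neighbours of the first tooth lie to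
  its left and all neighbours of the third one to its right. In the latter case the stretch of `u`
  from the last neighbour `u a` of the first tooth to the first neighbour `u c` of the third one is
  the body of an induced H-graph, whose wings are the two teeth together with `u (a - 1)` and
  `u (c + 1)` (`canonical_of_two_teeth`).
-/


open SimpleGraph

/-- `H` is contained in `G` as a (not necessarily induced) subgraph:
there is an injective graph homomorphism from `H` to `G`. -/
def ContainsSub {α β : Type*} (H : SimpleGraph α) (G : SimpleGraph β) : Prop :=
  ∃ f : H →g G, Function.Injective f

/-- `H` is contained in `G` as an induced subgraph: there is a graph embedding. -/
def ContainsInd {α β : Type*} (H : SimpleGraph α) (G : SimpleGraph β) : Prop :=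
  Nonempty (H ↪g G)

/-- The H-graph with body `b_1 … b_m` (the vertices `Sum.inl i`) and four wings
(`Sum.inr w`): wings `0, 1` (left) are adjacent to `b_1`, wings `2, 3` (right) are
adjacent to `b_m`; the two left wings are adjacent iff `lt`, and the two right
wings are adjacent iff `rt`. -/
def hGraph (m : ℕ) (lt rt : Prop) : SimpleGraph (Fin m ⊕ Fin 4) :=
  SimpleGraph.fromRel (fun x y =>
    match x, y with
    | Sum.inl i, Sum.inl j => (i : ℕ) + 1 = (j : ℕ)
    | Sum.inr w, Sum.inl i => ((w : ℕ) < 2 ∧ (i : ℕ) = 0) ∨ (2 ≤ (w : ℕ) ∧ (i : ℕ) + 1 = m)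
    | Sum.inr w, Sum.inr w' =>
        (lt ∧ (w : ℕ) = 0 ∧ (w' : ℕ) = 1) ∨ (rt ∧ (w : ℕ) = 2 ∧ (w' : ℕ) = 3)
    | _, _ => False)

/-- The three kinds of H-graphs with body of length `m`:
`t = 0` is the plain H-graph, `t = 1` the semi-tight one (the two right wings
adjacent), `t = 2` the tight one (both pairs of wings adjacent). -/
def hGraphT (m : ℕ) (t : Fin 3) : SimpleGraph (Fin m ⊕ Fin 4) :=
  hGraph m ((t : ℕ) = 2) ((t : ℕ) ≠ 0)

/-- `G` contains a canonical graph of order at least `s` as an induced subgraph: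
either a hole `C_n` with `n ≥ 4`, `n ≥ s`, or an H-graph (plain, semi-tight or
tight) with body of length `m ≥ 1`, `m ≥ s`. -/
def ContainsCanonical {β : Type*} (G : SimpleGraph β) (s : ℕ) : Prop :=
  (∃ n : ℕ, 4 ≤ n ∧ s ≤ n ∧ ContainsInd (cycleGraph n) G) ∨
  (∃ m : ℕ, 1 ≤ m ∧ s ≤ m ∧ ∃ t : Fin 3, ContainsInd (hGraphT m t) G)

/-- The rake with base the chordless path on `Fin n` and `k` teeth (`Sum.inr t`),
tooth `t` being adjacent exactly to its root `r t` on the base. -/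
def rakeGraph (n k : ℕ) (r : Fin k → Fin n) : SimpleGraph (Fin n ⊕ Fin k) :=
  SimpleGraph.fromRel (fun x y =>
    match x, y with
    | Sum.inl i, Sum.inl j => (i : ℕ) + 1 = (j : ℕ)
    | Sum.inr t, Sum.inl i => r t = i
    | _, _ => False)

/-- `G` contains a `k`-rake as a (not necessarily induced) subgraph. -/
def ContainsRake {β : Type*} (G : SimpleGraph β) (k : ℕ) : Prop :=
  ∃ (n : ℕ) (r : Fin k → Fin n), Function.Injective r ∧ ContainsSub (rakeGraph n k r) G

/-- `G` contains an `ℓ`-dense `k`-rake as a subgraph: every `ℓ` consecutive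
vertices of the base include at least one root. -/
def ContainsDenseRake {β : Type*} (G : SimpleGraph β) (k ℓ : ℕ) : Prop :=
  ∃ (n : ℕ) (r : Fin k → Fin n), Function.Injective r ∧
    (∀ i : ℕ, i + ℓ ≤ n → ∃ t : Fin k, i ≤ (r t : ℕ) ∧ (r t : ℕ) < i + ℓ) ∧
    ContainsSub (rakeGraph n k r) G

/-! ### Ramsey's theorem for increasing tuples -/

/-- Finite Ramsey theorem; the `r`-subsets of `ℕ` are encoded as strictly increasing lists. -/
theorem ramsey_lists {κ : Type} [Finite κ] (r m : ℕ) : ∃ N : ℕ, ∀ (c : List ℕ → κ) (A : Finset ℕ),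
    N ≤ A.card → ∃ B ⊆ A, B.card = m ∧ ∃ k : κ, ∀ l : List ℕ, l.length = r →
      l.Pairwise (· < ·) → (∀ x ∈ l, x ∈ B) → c l = k := by
  classical
  cases nonempty_fintype κ
  induction r generalizing m with
  | zero =>
    refine ⟨m, fun c A hA => ?_⟩
    obtain ⟨B, hB, hc⟩ := Finset.exists_subset_card_eq hA
    refine ⟨B, hB, hc, c [], fun l hl _ _ => ?_⟩
    rw [List.length_eq_zero_iff.mp hl]
  | succ r ih =>
    -- A set in which the colour of an `(r+1)`-tuple only depends on its least element.
    have step : ∀ t : ℕ, ∃ N : ℕ, ∀ (c : List ℕ → κ) (A : Finset ℕ), N ≤ A.card →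
        ∃ B ⊆ A, B.card = t ∧ ∃ k : ℕ → κ, ∀ x ∈ B, ∀ l : List ℕ, l.length = r →
          (x :: l).Pairwise (· < ·) → (∀ y ∈ l, y ∈ B) → c (x :: l) = k x := by
      intro t
      induction t with
      | zero =>
        refine ⟨0, fun c A _ => ⟨∅, by simp, rfl, fun _ => c [], by simp⟩⟩
      | succ t iht =>
        obtain ⟨N, hN⟩ := iht
        obtain ⟨R, hR⟩ := ih N
        refine ⟨R + 1, fun c A hA => ?_⟩
        have hne : A.Nonempty := by
          rw [← Finset.card_pos]; omega
        set x := A.min' hne with hx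
        have hxA : x ∈ A := A.min'_mem hne
        obtain ⟨B, hBA, hBc, k₀, hk₀⟩ := hR (fun l => c (x :: l)) (A.erase x)
          (by rw [Finset.card_erase_of_mem hxA]; omega)
        obtain ⟨C, hCB, hCc, k, hk⟩ := hN c B hBc.ge
        have hxC : x ∉ C := fun h => by simpa using hBA (hCB h)
        have hlt : ∀ y ∈ C, x < y := fun y hy => by
          have h1 := hBA (hCB hy)
          rw [Finset.mem_erase] at h1
          exact lt_of_le_of_ne (A.min'_le y h1.2) (Ne.symm h1.1)
        refine ⟨insert x C, ?_, by rw [Finset.card_insert_of_notMem hxC, hCc],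
          Function.update k x k₀, ?_⟩
        · intro y hy
          rcases Finset.mem_insert.mp hy with rfl | hy
          · exact hxA
          · exact Finset.mem_of_mem_erase (hBA (hCB hy))
        · intro y hy l hl hp hm
          have hp' := List.pairwise_cons.mp hp
          rcases Finset.mem_insert.mp hy with rfl | hy
          · rw [Function.update_self]
            refine hk₀ l hl hp'.2 fun z hz => hCB ?_
            rcases Finset.mem_insert.mp (hm z hz) with h | h
            · exact absurd (hp'.1 z hz) (by rw [h]; exact lt_irrefl _)
            · exact h
          · have hyx : y ≠ x := fun h => hxC (h ▸ hy)
            rw [Function.update_of_ne hyx]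
            refine hk y hy l hl hp fun z hz => ?_
            rcases Finset.mem_insert.mp (hm z hz) with h | h
            · exact absurd (hp'.1 z hz) (by rw [h]; exact not_lt.mpr (hlt y hy).le)
            · exact h
    obtain ⟨N, hN⟩ := step (Fintype.card κ * m)
    refine ⟨N, fun c A hA => ?_⟩
    obtain ⟨B, hBA, hBc, k, hk⟩ := hN c A hA
    have : Nonempty κ := ⟨c []⟩
    obtain ⟨y, -, hy⟩ := Finset.exists_le_card_fiber_of_mul_le_card_of_maps_to
      (s := B) (t := Finset.univ) (f := k) (n := m) (fun _ _ => Finset.mem_univ _)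
      Finset.univ_nonempty (by rw [hBc, Finset.card_univ])
    obtain ⟨C, hC, hCc⟩ := Finset.exists_subset_card_eq hy
    have hCB : C ⊆ B := fun z hz => (Finset.mem_filter.mp (hC hz)).1
    refine ⟨C, hCB.trans hBA, hCc, y, fun l hl hp hm => ?_⟩
    cases l with
    | nil => simp at hl
    | cons x l =>
      have hxC : x ∈ C := hm x (by simp)
      rw [hk x (hCB hxC) l (by simpa using hl) hp fun z hz => hCB (hm z (by simp [hz]))]
      exact (Finset.mem_filter.mp (hC hxC)).2

/-- Pieces `F a b` of `L` vertices, one for each pair `a < b`: unless `G` contains `K_{q,q}`, one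
can pass to a long subsequence `S` of indices such that the pieces of pairs lying one after the
other are anticomplete. If some adjacency between two such pieces persisted over a Ramsey-homogeneous
set, then `q` early pieces and `q` late pieces would span a biclique. -/
theorem anticomplete_pieces (q L m : ℕ) : ∃ N : ℕ, ∀ (β : Type) (G : SimpleGraph β)
    (F : ℕ → ℕ → Fin L → β),
    (∀ a b c d i, a < b → b < c → c < d → d < N → F a b i ≠ F c d i) →
    ContainsSub (completeBipartiteGraph (Fin q) (Fin q)) G ∨
    ∃ S : ℕ → ℕ, (∀ i j, i < j → j < m → S i < S j) ∧ (∀ i, i < m → S i < N) ∧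
      ∀ a b c d, a < b → b < c → c < d → d < m → ∀ i j,
        ¬ G.Adj (F (S a) (S b) i) (F (S c) (S d) j) := by
  obtain ⟨N, hN⟩ := ramsey_lists (κ := Set (Fin L × Fin L)) 4 (m + 4 * q)
  refine ⟨N, fun β G F hF => ?_⟩
  obtain ⟨B, hBA, hBc, k, hk⟩ := hN (fun l => {ij | G.Adj (F (l.getD 0 0) (l.getD 1 0) ij.1)
    (F (l.getD 2 0) (l.getD 3 0) ij.2)}) (Finset.range N) (by simp)
  set S : ℕ → ℕ := fun i => if h : i < m + 4 * q then B.orderEmbOfFin hBc ⟨i, h⟩ else 0 with hS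
  have hS1 : ∀ i j, i < j → j < m + 4 * q → S i < S j := by
    intro i j hij hj
    simp only [hS, dif_pos hj, dif_pos (hij.trans hj)]
    exact (B.orderEmbOfFin hBc).strictMono hij
  have hSB : ∀ i, i < m + 4 * q → S i ∈ B := by
    intro i hi
    simp only [hS, dif_pos hi]
    exact B.orderEmbOfFin_mem hBc _
  have hS2 : ∀ i, i < m + 4 * q → S i < N := fun i hi => Finset.mem_range.mp (hBA (hSB i hi))
  have hhom : ∀ a b c d, a < b → b < c → c < d → d < m + 4 * q → ∀ i j,
      (G.Adj (F (S a) (S b) i) (F (S c) (S d) j) ↔ (i, j) ∈ k) := by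
    intro a b c d hab hbc hcd hd i j
    have h := hk [S a, S b, S c, S d] rfl
      (by
        have h1 := hS1 a b hab (by omega)
        have h2 := hS1 b c hbc (by omega)
        have h3 := hS1 c d hcd (by omega)
        simp
        omega)
      (by
        intro x hx
        simp at hx
        rcases hx with rfl | rfl | rfl | rfl <;> exact hSB _ (by omega))
    rw [← h]
    simp
  by_cases hk0 : k = ∅
  · right
    refine ⟨S, fun i j hij hj => hS1 i j hij (by omega), fun i hi => hS2 i (by omega),
      fun a b c d hab hbc hcd hd i j => ?_⟩
    rw [hhom a b c d hab hbc hcd (by omega), hk0]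
    simp
  · left
    obtain ⟨⟨i, j⟩, hij⟩ := Set.nonempty_iff_ne_empty.mpr hk0
    have hadj : ∀ x y : Fin q, G.Adj (F (S (2 * x)) (S (2 * x + 1)) i)
        (F (S (2 * q + 2 * y)) (S (2 * q + 2 * y + 1)) j) := fun x y =>
      (hhom _ _ _ _ (by omega) (by omega) (by omega) (by omega) i j).mpr hij
    have hne : ∀ x y i, x + 1 < y → y + 1 < m + 4 * q →
        F (S x) (S (x + 1)) i ≠ F (S y) (S (y + 1)) i := fun x y i hxy hy =>
      hF _ _ _ _ i (hS1 _ _ (by omega) (by omega)) (hS1 _ _ (by omega) (by omega))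
        (hS1 _ _ (by omega) (by omega)) (hS2 _ (by omega))
    refine ⟨⟨Sum.elim (fun x => F (S (2 * x)) (S (2 * x + 1)) i)
      (fun y => F (S (2 * q + 2 * y)) (S (2 * q + 2 * y + 1)) j), ?_⟩, ?_⟩
    · rintro (x | x) (y | y) h
      · simp at h
      · exact hadj x y
      · exact (hadj y x).symm
      · simp at h
    · rintro (x | x) (y | y) h
      · rcases lt_trichotomy (x : ℕ) y with hlt | heq | hgt
        · exact absurd h (hne _ _ i (by omega) (by omega))
        · rw [Fin.ext heq]
        · exact absurd h.symm (hne _ _ i (by omega) (by omega))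
      · exact absurd h (hadj x y).ne
      · exact absurd h (hadj y x).ne'
      · rcases lt_trichotomy (x : ℕ) y with hlt | heq | hgt
        · exact absurd h (hne _ _ j (by omega) (by omega))
        · rw [Fin.ext heq]
        · exact absurd h.symm (hne _ _ j (by omega) (by omega))

/-! ### Chordless paths -/

/-- The vertices `v 0, …, v (m - 1)` are distinct and induce a chordless path in this order
(the values `v i` with `m ≤ i` are irrelevant). -/
def IndPath {β : Type} (G : SimpleGraph β) (v : ℕ → β) (m : ℕ) : Prop :=
  (∀ i < m, ∀ j < m, v i = v j → i = j) ∧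
    ∀ i < m, ∀ j < m, (G.Adj (v i) (v j) ↔ i + 1 = j ∨ j + 1 = i)

theorem IndPath.shift {β : Type} {G : SimpleGraph β} {v : ℕ → β} {M : ℕ} (h : IndPath G v M)
    (a m : ℕ) (hm : a + m ≤ M) : IndPath G (fun i => v (a + i)) m := by
  refine ⟨fun i hi j hj hij => ?_, fun i hi j hj => ?_⟩
  · have := h.1 (a + i) (by omega) (a + j) (by omega) hij
    omega
  · rw [h.2 (a + i) (by omega) (a + j) (by omega)]
    omega

theorem IndPath.reverse {β : Type} {G : SimpleGraph β} {v : ℕ → β} {m : ℕ}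
    (h : IndPath G v m) : IndPath G (fun i => v (m - 1 - i)) m := by
  refine ⟨fun i hi j hj hij => ?_, fun i hi j hj => ?_⟩
  · have := h.1 (m - 1 - i) (by omega) (m - 1 - j) (by omega) hij
    omega
  · rw [h.2 (m - 1 - i) (by omega) (m - 1 - j) (by omega)]
    omega

/-- A geodesic of the subgraph induced by `X` is a chordless path of `G`. -/
theorem exists_geodesic {β : Type} (G : SimpleGraph β) (X : Set β) (x y : X)
    (h : (G.induce X).Reachable x y) : ∃ (d : ℕ) (v : ℕ → β), v 0 = x ∧ v d = y ∧
      IndPath G v (d + 1) ∧ ∀ i, v i ∈ X := by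
  obtain ⟨p, hp⟩ := h.exists_walk_length_eq_dist
  have hpath := p.isPath_of_length_eq_dist hp
  -- A vertex at position `i` on a geodesic has distance exactly `i` from the start.
  have hd : ∀ i ≤ p.length, (G.induce X).dist x (p.getVert i) = i := by
    intro i hi
    have h1 := (G.induce X).dist_le (p.take i)
    have h2 := (G.induce X).dist_le (p.drop i)
    have h3 : (G.induce X).dist x y ≤
        (G.induce X).dist x (p.getVert i) + (G.induce X).dist (p.getVert i) y :=
      SimpleGraph.Reachable.dist_triangle_left (p.take i).reachable y
    rw [SimpleGraph.Walk.take_length] at h1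
    rw [SimpleGraph.Walk.drop_length] at h2
    omega
  have hclose : ∀ i ≤ p.length, ∀ j ≤ p.length,
      G.Adj (p.getVert i : β) (p.getVert j : β) → j ≤ i + 1 := by
    intro i hi j hj hij
    have hij' : (G.induce X).Adj (p.getVert i) (p.getVert j) := hij
    have h1 := hd i hi
    have h2 := hd j hj
    have h3 : (G.induce X).dist x (p.getVert j) ≤
        (G.induce X).dist x (p.getVert i) + (G.induce X).dist (p.getVert i) (p.getVert j) :=
      SimpleGraph.Reachable.dist_triangle_left (p.take i).reachable _
    rw [SimpleGraph.dist_eq_one_iff_adj.mpr hij'] at h3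
    omega
  have hinj : ∀ i ≤ p.length, ∀ j ≤ p.length, (p.getVert i : β) = p.getVert j → i = j := by
    intro i hi j hj hij
    rw [← hd i hi, ← hd j hj, Subtype.ext hij]
  refine ⟨p.length, fun i => p.getVert i, by simp, by simp, ⟨fun i hi j hj hij =>
    hinj i (by omega) j (by omega) hij, fun i hi j hj => ⟨fun hij => ?_, ?_⟩⟩,
    fun i => (p.getVert i).2⟩
  · have h1 := hclose i (by omega) j (by omega) hij
    have h2 := hclose j (by omega) i (by omega) hij.symm
    have h3 : i ≠ j := fun h => hij.ne (by rw [h])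
    omega
  · rintro (h | h)
    · subst h
      exact p.adj_getVert_succ (by omega)
    · subst h
      exact (p.adj_getVert_succ (i := j) (by omega)).symm

/-- A sequence in `X` with equal or adjacent consecutive terms connects its ends inside `X`. -/
theorem reachable_of_chain {β : Type} (G : SimpleGraph β) (X : Set β) (w : ℕ → β) (a k : ℕ)
    (hX : ∀ i ≤ k, w (a + i) ∈ X)
    (hw : ∀ i < k, w (a + i) = w (a + (i + 1)) ∨ G.Adj (w (a + i)) (w (a + (i + 1)))) :
    (G.induce X).Reachable ⟨w (a + 0), hX 0 (by omega)⟩ ⟨w (a + k), hX k le_rfl⟩ := by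
  induction k with
  | zero => exact SimpleGraph.Reachable.refl _
  | succ k ih =>
    refine (ih (fun i hi => hX i (by omega)) (fun i hi => hw i (by omega))).trans ?_
    rcases hw k (by omega) with h | h
    · have : (⟨w (a + k), hX k (by omega)⟩ : X) = ⟨w (a + (k + 1)), hX (k + 1) le_rfl⟩ :=
        Subtype.ext h
      rw [this]
    · exact SimpleGraph.Adj.reachable (G := G.induce X) h

/-- The Galvin–Rival–Sands theorem: a long path contains a long chordless path on (some of) its
vertices, or there is a large biclique. If all chordless paths are short, then any two vertices
`p a`, `p b` are joined by a short piece inside `p '' [a, b]`. Along a suitable sequence of indices,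
pieces that are not consecutive are anticomplete, so a geodesic in the union of the pieces has to
visit all of them. -/
theorem exists_long_indPath (q M : ℕ) : ∃ N : ℕ, ∀ (β : Type) (G : SimpleGraph β) (p : ℕ → β),
    (∀ i < N, ∀ j < N, p i = p j → i = j) → (∀ i, i + 1 < N → G.Adj (p i) (p (i + 1))) →
    ContainsSub (completeBipartiteGraph (Fin q) (Fin q)) G ∨
    ∃ v : ℕ → β, IndPath G v M ∧ ∀ i < M, ∃ a < N, v i = p a := by
  obtain ⟨N, hN⟩ := anticomplete_pieces q (M + 1) (M + 3)
  refine ⟨N, fun β G p hp hadj => ?_⟩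
  by_cases hM : ∃ v : ℕ → β, IndPath G v M ∧ ∀ i < M, ∃ a < N, v i = p a
  · exact Or.inr hM
  left
  have hshort : ∀ a b, ∃ f : ℕ → β, a < b → b < N → (f 0 = p a ∧ f M = p b ∧
      (∀ i < M, f i = f (i + 1) ∨ G.Adj (f i) (f (i + 1))) ∧
      ∀ i, ∃ x, a ≤ x ∧ x ≤ b ∧ f i = p x) := by
    intro a b
    by_cases hab : a < b ∧ b < N
    swap
    · exact ⟨p, fun h1 h2 => absurd ⟨h1, h2⟩ hab⟩
    obtain ⟨hab, hb⟩ := hab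
    set X : Set β := p '' Set.Icc a b with hXdef
    have hX : ∀ i ≤ b - a, p (a + i) ∈ X := fun i hi => ⟨a + i, ⟨by omega, by omega⟩, rfl⟩
    have hr := reachable_of_chain G X p a (b - a) hX
      (fun i hi => Or.inr (hadj (a + i) (by omega)))
    obtain ⟨d, v, h0, hd, hv, hvX⟩ := exists_geodesic G X _ _ hr
    have hab' : a + (b - a) = b := by omega
    simp only [add_zero] at h0
    simp only [hab'] at hd
    have hdM : d ≤ M := by
      by_contra hcon
      refine hM ⟨v, ?_, fun i _ => ?_⟩
      · simpa using hv.shift 0 M (by omega)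
      · obtain ⟨x, hx, hxe⟩ := hvX i
        exact ⟨x, by have := hx.2; omega, hxe.symm⟩
    -- The geodesic is padded by repeating its last vertex.
    refine ⟨fun i => v (min i d), fun _ _ => ⟨by simpa using h0, by simpa [hdM] using hd,
      fun i hi => ?_, fun i => ?_⟩⟩
    · by_cases hid : i < d
      · right
        beta_reduce
        rw [min_eq_left hid.le, min_eq_left (by omega)]
        exact (hv.2 i (by omega) (i + 1) (by omega)).mpr (Or.inl rfl)
      · left
        beta_reduce
        rw [min_eq_right (by omega), min_eq_right (by omega)]
    · obtain ⟨x, hx, hxe⟩ := hvX (min i d)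
      exact ⟨x, hx.1, hx.2, hxe.symm⟩
  choose f hf using hshort
  rcases hN β G (fun a b i => f a b i) (by
    intro a b c d i hab hbc hcd hd h
    obtain ⟨x, hx1, hx2, hx⟩ := (hf a b hab (by omega)).2.2.2 i
    obtain ⟨y, hy1, hy2, hy⟩ := (hf c d hcd hd).2.2.2 i
    have := hp x (by omega) y (by omega) (by rw [← hx, ← hy]; exact h)
    omega) with h | ⟨S, hS1, hS2, hS3⟩
  · exact h
  exfalso
  have hfS : ∀ i, i + 1 < M + 3 → _ := fun i hi =>
    hf (S i) (S (i + 1)) (hS1 i (i + 1) (by omega) hi) (hS2 (i + 1) hi)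
  set X : Set β := {x | ∃ i, i + 1 < M + 3 ∧ ∃ j ≤ M, x = f (S i) (S (i + 1)) j} with hX
  have hfX : ∀ i, i + 1 < M + 3 → ∀ j ≤ M, f (S i) (S (i + 1)) j ∈ X :=
    fun i hi j hj => ⟨i, hi, j, hj, rfl⟩
  have hpX : ∀ i, i < M + 3 → p (S i) ∈ X := by
    intro i hi
    rcases Nat.lt_or_ge (i + 1) (M + 3) with h | h
    · rw [← (hfS i h).1]
      exact hfX i h 0 (by omega)
    · obtain ⟨k, rfl⟩ : ∃ k, i = k + 1 := ⟨i - 1, by omega⟩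
      rw [← (hfS k hi).2.1]
      exact hfX k hi M le_rfl
  have hreach : ∀ i (hi : i < M + 3),
      (G.induce X).Reachable ⟨p (S 0), hpX 0 (by omega)⟩ ⟨p (S i), hpX i hi⟩ := by
    intro i
    induction i with
    | zero => exact fun _ => SimpleGraph.Reachable.refl _
    | succ i ih =>
      intro hi
      refine (ih (by omega)).trans ?_
      have h := reachable_of_chain G X (f (S i) (S (i + 1))) 0 M
        (fun j hj => by simpa using hfX i hi j hj)
        (fun j hj => by simpa using (hfS i hi).2.2.1 j hj)
      simp only [add_zero, zero_add, (hfS i hi).1, (hfS i hi).2.1] at h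
      exact h
  obtain ⟨d, v, h0, hd, hv, hvX⟩ := exists_geodesic G X _ _ (hreach (M + 2) (by omega))
  have hclose : ∀ i, i + 1 < M + 3 → ∀ j, j + 1 < M + 3 → ∀ a ≤ M, ∀ b ≤ M,
      (f (S i) (S (i + 1)) a = f (S j) (S (j + 1)) b ∨
        G.Adj (f (S i) (S (i + 1)) a) (f (S j) (S (j + 1)) b)) → j ≤ i + 1 := by
    intro i hi j hj a ha b hb h
    by_contra hcon
    rcases h with h | h
    · obtain ⟨x, hx1, hx2, hx⟩ := (hfS i hi).2.2.2 a
      obtain ⟨y, hy1, hy2, hy⟩ := (hfS j hj).2.2.2 b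
      have h1 := hS1 (i + 1) j (by omega) (by omega)
      have h2 := hS2 (j + 1) hj
      have h3 := hS2 (i + 1) hi
      have := hp x (by omega) y (by omega) (by rw [← hx, ← hy]; exact h)
      omega
    · exact hS3 i (i + 1) j (j + 1) (by omega) (by omega) (by omega) hj
        ⟨a, by omega⟩ ⟨b, by omega⟩ h
  have hwalk : ∀ k ≤ d, ∀ i, i + 1 < M + 3 → ∀ a ≤ M, v k = f (S i) (S (i + 1)) a →
      i ≤ k + 1 := by
    intro k
    induction k with
    | zero =>
      intro _ i hi a ha h
      refine hclose 0 (by omega) i hi 0 (by omega) a ha (Or.inl ?_)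
      rw [(hfS 0 (by omega)).1, ← h, h0]
    | succ k ih =>
      intro hk i hi a ha h
      obtain ⟨j, hj, b, hb, hjb⟩ := hvX k
      have h1 := ih (by omega) j hj b hb hjb
      have h2 := hclose j hj i hi b hb a ha (Or.inr (by
        rw [← h, ← hjb]
        exact (hv.2 k (by omega) (k + 1) (by omega)).mpr (Or.inl rfl)))
      omega
  have hend := hwalk d le_rfl (M + 1) (by omega) M le_rfl (by
    rw [hd]; exact (hfS (M + 1) (by omega)).2.1.symm)
  refine hM ⟨v, ?_, fun i _ => ?_⟩
  · simpa using hv.shift 0 M (by omega)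
  · obtain ⟨j, hj, b, hb, hjb⟩ := hvX i
    obtain ⟨x, hx1, hx2, hx⟩ := (hfS j hj).2.2.2 b
    exact ⟨x, by have := hS2 (j + 1) hj; omega, by rw [hjb, hx]⟩

/-! ### Recognising canonical graphs -/

theorem hole_embed {β : Type} {G : SimpleGraph β} {v : ℕ → β} {m : ℕ} (hm : 3 ≤ m)
    (hv : IndPath G v m) (t : β) (ht : ∀ i < m, t ≠ v i) (h0 : G.Adj t (v 0))
    (h1 : G.Adj t (v (m - 1))) (h2 : ∀ i, 0 < i → i + 1 < m → ¬ G.Adj t (v i)) :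
    ContainsInd (cycleGraph (m + 1)) G := by
  have htv : ∀ i < m, (G.Adj t (v i) ↔ i = 0 ∨ i + 1 = m) := by
    intro i hi
    constructor
    · intro h
      by_contra hcon
      exact h2 i (by omega) (by omega) h
    · rintro (rfl | h)
      · exact h0
      · obtain rfl : i = m - 1 := by omega
        exact h1
  have hcyc : ∀ x y : Fin (m + 1), (cycleGraph (m + 1)).Adj x y ↔
      ((x : ℕ) + 1 = y ∨ (y : ℕ) + 1 = x ∨ ((x : ℕ) = 0 ∧ (y : ℕ) = m) ∨
        ((y : ℕ) = 0 ∧ (x : ℕ) = m)) := by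
    intro x y
    have hsub : ∀ x y : Fin (m + 1), ((x - y).val = 1 ↔
        (y : ℕ) + 1 = x ∨ ((x : ℕ) = 0 ∧ (y : ℕ) = m)) := by
      intro x y
      have hx := x.2
      have hy := y.2
      rw [Fin.sub_def]
      change (m + 1 - y.val + x.val) % (m + 1) = 1 ↔ _
      rcases Nat.lt_or_ge x.val y.val with h | h
      · rw [Nat.mod_eq_of_lt (by omega)]
        omega
      · rw [show m + 1 - y.val + x.val = (x.val - y.val) + (m + 1) by omega,
          Nat.add_mod_right, Nat.mod_eq_of_lt (by omega)]
        omega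
    rw [cycleGraph_adj', hsub, hsub]
    omega
  refine ⟨⟨⟨fun i => if (i : ℕ) < m then v i else t, ?_⟩, ?_⟩⟩
  · intro x y hxy
    have hx := x.2
    have hy := y.2
    by_cases hxm : (x : ℕ) < m <;> by_cases hym : (y : ℕ) < m <;> simp only [hxm, hym, if_true,
      if_false] at hxy
    · exact Fin.ext (hv.1 _ hxm _ hym hxy)
    · exact absurd hxy.symm (ht _ hxm)
    · exact absurd hxy (ht _ hym)
    · exact Fin.ext (by omega)
  · intro x y
    have hx := x.2
    have hy := y.2
    rw [hcyc]
    change G.Adj (if (x : ℕ) < m then v x else t) (if (y : ℕ) < m then v y else t) ↔ _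
    by_cases hxm : (x : ℕ) < m <;> by_cases hym : (y : ℕ) < m <;>
      simp only [hxm, hym, if_true, if_false]
    · rw [hv.2 _ hxm _ hym]
      omega
    · rw [G.adj_comm, htv _ hxm]
      omega
    · rw [htv _ hym]
      omega
    · simp only [G.irrefl, false_iff]
      omega

/-- An induced path `v 0, …, v (m + 1)` with outer vertices `l`, `r` hanging at `v 1` and `v m`
carries an H-graph with body `v 1, …, v m` and wings `l, v 0` and `r, v (m + 1)`. -/
theorem hGraph_embed {β : Type} {G : SimpleGraph β} {v : ℕ → β} {m : ℕ} (hm : 1 ≤ m)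
    (hv : IndPath G v (m + 2)) (l r : β) (hl : ∀ i < m + 2, l ≠ v i) (hr : ∀ i < m + 2, r ≠ v i)
    (hl1 : G.Adj l (v 1)) (hl2 : ∀ i, 2 ≤ i → i < m + 2 → ¬ G.Adj l (v i))
    (hr1 : G.Adj r (v m)) (hr2 : ∀ i < m, ¬ G.Adj r (v i)) (hlr : l ≠ r) (hlr' : ¬ G.Adj l r) :
    ContainsInd (hGraph m (G.Adj l (v 0)) (G.Adj r (v (m + 1)))) G := by
  have hlv : ∀ i < m, (G.Adj l (v (i + 1)) ↔ i = 0) := by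
    intro i hi
    constructor
    · intro h
      by_contra hcon
      exact hl2 (i + 1) (by omega) (by omega) h
    · rintro rfl
      exact hl1
  have hrv : ∀ i < m, (G.Adj r (v (i + 1)) ↔ i + 1 = m) := by
    intro i hi
    constructor
    · intro h
      by_contra hcon
      exact hr2 (i + 1) (by omega) h
    · rintro rfl
      exact hr1
  have hl3 : ¬ G.Adj l (v (m + 1)) := hl2 _ (by omega) (by omega)
  have hr3 : ¬ G.Adj r (v 0) := hr2 _ (by omega)
  have h03 : v 0 ≠ v (m + 1) := fun h => by
    have := hv.1 0 (by omega) (m + 1) (by omega) h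
    omega
  have h03' : ¬ G.Adj (v 0) (v (m + 1)) := by
    rw [hv.2 0 (by omega) (m + 1) (by omega)]
    omega
  have hw0 : ∀ i < m, v (i + 1) ≠ v 0 := fun i hi h => by
    have := hv.1 (i + 1) (by omega) 0 (by omega) h
    omega
  have hw3 : ∀ i < m, v (i + 1) ≠ v (m + 1) := fun i hi h => by
    have := hv.1 (i + 1) (by omega) (m + 1) (by omega) h
    omega
  have hv0 : ∀ i < m, (G.Adj (v 0) (v (i + 1)) ↔ i = 0) := fun i hi => by
    rw [hv.2 0 (by omega) (i + 1) (by omega)]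
    omega
  have hv3 : ∀ i < m, (G.Adj (v (m + 1)) (v (i + 1)) ↔ i + 1 = m) := fun i hi => by
    rw [hv.2 (m + 1) (by omega) (i + 1) (by omega)]
    omega
  have hwing : ∀ (i : Fin m) (w : Fin 4),
      v (i + 1) ≠ (![l, v 0, r, v (m + 1)] : Fin 4 → β) w := by
    intro i w
    fin_cases w
    · exact (hl _ (by omega)).symm
    · exact hw0 _ i.2
    · exact (hr _ (by omega)).symm
    · exact hw3 _ i.2
  have hwadj : ∀ (i : Fin m) (w : Fin 4), (G.Adj ((![l, v 0, r, v (m + 1)] : Fin 4 → β) w)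
      (v (i + 1)) ↔ ((w : ℕ) < 2 ∧ (i : ℕ) = 0) ∨ (2 ≤ (w : ℕ) ∧ (i : ℕ) + 1 = m)) := by
    intro i w
    fin_cases w
    · simpa using hlv _ i.2
    · simpa using hv0 _ i.2
    · simpa using hrv _ i.2
    · simpa using hv3 _ i.2
  refine ⟨⟨⟨Sum.elim (fun i => v (i + 1)) ![l, v 0, r, v (m + 1)], ?_⟩, ?_⟩⟩
  · rintro (i | w) (j | w') h
    · have := hv.1 (i + 1) (by omega) (j + 1) (by omega) h
      exact congrArg _ (Fin.ext (by omega))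
    · exact absurd h (hwing i w')
    · exact absurd h.symm (hwing j w)
    · have h1 := hl 0 (by omega)
      have h2 := hl (m + 1) (by omega)
      have h3 := hr 0 (by omega)
      have h4 := hr (m + 1) (by omega)
      fin_cases w <;> fin_cases w' <;>
        simp_all [h1.symm, h2.symm, h3.symm, h4.symm, hlr.symm, h03.symm]
  · rintro (i | w) (j | w')
    · change G.Adj (v (i + 1)) (v (j + 1)) ↔ _
      simp only [hGraph, SimpleGraph.fromRel_adj]
      rw [hv.2 (i + 1) (by omega) (j + 1) (by omega)]
      simp only [ne_eq, Sum.inl.injEq, Fin.ext_iff]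
      omega
    · change G.Adj (v (i + 1)) ((![l, v 0, r, v (m + 1)] : Fin 4 → β) w') ↔ _
      simp only [hGraph, SimpleGraph.fromRel_adj]
      rw [G.adj_comm, hwadj]
      simp
    · change G.Adj ((![l, v 0, r, v (m + 1)] : Fin 4 → β) w) (v (j + 1)) ↔ _
      simp only [hGraph, SimpleGraph.fromRel_adj]
      rw [hwadj]
      simp
    · change G.Adj ((![l, v 0, r, v (m + 1)] : Fin 4 → β) w)
        ((![l, v 0, r, v (m + 1)] : Fin 4 → β) w') ↔ _
      simp only [hGraph, SimpleGraph.fromRel_adj]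
      fin_cases w <;> fin_cases w' <;>
        simp [hl3, hr3, h03', hlr', G.adj_comm r l, G.adj_comm (v 0) r, G.adj_comm (v 0) l,
          G.adj_comm (v (m + 1)) l, G.adj_comm (v (m + 1)) r, G.adj_comm (v (m + 1)) (v 0)]

/-- The data of `hGraph_embed` give one of the three canonical H-graphs. When only the left pair
of wings is adjacent, reading the path backwards gives the semi-tight H-graph. -/
theorem canonical_of_two_teeth {β : Type} {G : SimpleGraph β} {v : ℕ → β} {m s : ℕ} (hm : 1 ≤ m)
    (hs : s ≤ m)
    (hv : IndPath G v (m + 2)) (l r : β) (hl : ∀ i < m + 2, l ≠ v i) (hr : ∀ i < m + 2, r ≠ v i)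
    (hl1 : G.Adj l (v 1)) (hl2 : ∀ i, 2 ≤ i → i < m + 2 → ¬ G.Adj l (v i))
    (hr1 : G.Adj r (v m)) (hr2 : ∀ i < m, ¬ G.Adj r (v i)) (hlr : l ≠ r) (hlr' : ¬ G.Adj l r) :
    ContainsCanonical G s := by
  right
  refine ⟨m, hm, hs, ?_⟩
  have h1 := hGraph_embed hm hv l r hl hr hl1 hl2 hr1 hr2 hlr hlr'
  have h2 := hGraph_embed hm hv.reverse r l (fun i hi => hr _ (by omega))
    (fun i hi => hl _ (by omega))
    (by simpa using hr1) (fun i hi hi' => hr2 _ (by omega))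
    (by simpa [show m + 2 - 1 - m = 1 by omega] using hl1)
    (fun i hi => hl2 _ (by omega) (by omega)) hlr.symm (fun h => hlr' h.symm)
  simp only [show m + 2 - 1 - 0 = m + 1 by omega,
    show m + 2 - 1 - (m + 1) = 0 by omega] at h2
  by_cases hL : G.Adj l (v 0) <;> by_cases hR : G.Adj r (v (m + 1))
  · exact ⟨2, by simpa [hGraphT, hL, hR] using h1⟩
  · exact ⟨1, by simpa [hGraphT, hL, hR] using h2⟩
  · exact ⟨1, by simpa [hGraphT, hL, hR] using h1⟩
  · exact ⟨0, by simpa [hGraphT, hL, hR] using h1⟩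

theorem exists_last (P : ℕ → Prop) (x lo : ℕ) (hx : x < lo) (hP : P x) :
    ∃ a, x ≤ a ∧ a < lo ∧ P a ∧ ∀ z, a < z → z < lo → ¬ P z := by
  classical
  obtain ⟨k, rfl⟩ : ∃ k, lo = k + 1 := ⟨lo - 1, by omega⟩
  refine ⟨Nat.findGreatest P k, Nat.le_findGreatest (by omega) hP,
    Nat.lt_succ_of_le (Nat.findGreatest_le k), Nat.findGreatest_spec (by omega) hP,
    fun z hz hz' => Nat.findGreatest_is_greatest hz (by omega)⟩

theorem exists_first (P : ℕ → Prop) (hi y : ℕ) (hy : hi ≤ y) (hP : P y) :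
    ∃ c, hi ≤ c ∧ c ≤ y ∧ P c ∧ ∀ z, hi ≤ z → z < c → ¬ P z := by
  classical
  have h : ∃ c, hi ≤ c ∧ P c := ⟨y, hy, hP⟩
  exact ⟨Nat.find h, (Nat.find_spec h).1, Nat.find_min' h ⟨hy, hP⟩, (Nat.find_spec h).2,
    fun z hz hz' hPz => Nat.find_min h hz' ⟨hz, hPz⟩⟩

/-- An outer vertex whose neighbours on an induced path skip a long window of it closes a hole. -/
theorem hole_of_gap {β : Type} {G : SimpleGraph β} {u : ℕ → β} {M s lo hi x y : ℕ}
    (hu : IndPath G u M) (t : β) (ht : ∀ i < M, t ≠ u i) (hx : x < lo) (hy : hi ≤ y) (hyM : y < M)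
    (hlen : lo + s + 2 ≤ hi) (hgap : ∀ i, lo ≤ i → i < hi → ¬ G.Adj t (u i))
    (htx : G.Adj t (u x)) (hty : G.Adj t (u y)) : ContainsCanonical G s := by
  obtain ⟨a, -, ha, hPa, hla⟩ := exists_last (fun i => G.Adj t (u i)) x lo hx htx
  obtain ⟨c, hc, hcy, hPc, hfc⟩ := exists_first (fun i => G.Adj t (u i)) hi y hy hty
  left
  refine ⟨c - a + 1 + 1, by omega, by omega, hole_embed (by omega)
    (hu.shift a (c - a + 1) (by omega)) t (fun i hi => ht _ (by omega)) (by simpa using hPa)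
    ?_ ?_⟩
  · simpa [show a + (c - a) = c by omega] using hPc
  · intro i hi0 hi1 h
    by_cases h1 : a + i < lo
    · exact hla _ (by omega) h1 h
    · by_cases h2 : a + i < hi
      · exact hgap _ (by omega) h2 h
      · exact hfc _ (by omega) (by omega) h

/-! ### Teeth on a chordless path -/

/-- Every long chordless path `u` on vertices of the base `p` of an `ℓ`-dense rake is again the
base of a dense rake with distinct teeth: `C j x` says that `x` is a tooth at `u j`, i.e. a rake tooth rooted
at `u j` or the successor of `u j` on the base, provided it lies off `u`. Starting at `u i = p a`
and following the base, one leaves `u` or meets a root within `ℓ` steps; as `u` has no chords, base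
edges between vertices of `u` are edges of `u`, so each step moves by one along `u`. -/
theorem exists_teeth {β : Type} {G : SimpleGraph β} {p u : ℕ → β} {n N M D ℓ : ℕ}
    (r : Fin D → ℕ) (T : Fin D → β) (hp : ∀ i < n, ∀ j < n, p i = p j → i = j)
    (hadj : ∀ i, i + 1 < n → G.Adj (p i) (p (i + 1))) (hTi : Function.Injective T)
    (hTp : ∀ t, ∀ i < n, T t ≠ p i) (hrn : ∀ t, r t < n) (hTr : ∀ t, G.Adj (p (r t)) (T t))
    (hdense : ∀ i, i + ℓ ≤ n → ∃ t, i ≤ r t ∧ r t < i + ℓ)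
    (hu : IndPath G u M) (hup : ∀ i < M, ∃ a < N, u i = p a) (hN : N + ℓ ≤ n) :
    ∃ C : ℕ → β → Prop,
      (∀ j x, C j x → G.Adj x (u j) ∧ ∀ i < M, x ≠ u i) ∧
      (∀ i < M, ∀ j < M, ∀ x, C i x → C j x → i = j) ∧
      ∀ i < M, ∃ j < M, ∃ x, C j x ∧ i ≤ j + ℓ ∧ j ≤ i + ℓ := by
  refine ⟨fun j x => (∀ i < M, x ≠ u i) ∧ ∃ a < n, u j = p a ∧
    ((a + 1 < n ∧ x = p (a + 1)) ∨ ∃ t, r t = a ∧ x = T t), ?_, ?_, ?_⟩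
  · rintro j x ⟨hx, a, ha, hja, ⟨ha', rfl⟩ | ⟨t, rfl, rfl⟩⟩
    · exact ⟨by rw [hja]; exact (hadj a ha').symm, hx⟩
    · exact ⟨by rw [hja]; exact (hTr t).symm, hx⟩
  · rintro i hi j hj x ⟨-, a, ha, hia, h⟩ ⟨-, b, hb, hjb, h'⟩
    apply hu.1 i hi j hj
    rw [hia, hjb]
    congr 1
    rcases h with ⟨ha', h⟩ | ⟨t, hta, h⟩ <;> rcases h' with ⟨hb', h'⟩ | ⟨t', htb, h'⟩
    · have := hp _ ha' _ hb' (h.symm.trans h')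
      omega
    · exact absurd (h'.symm.trans h) (hTp _ _ ha')
    · exact absurd (h.symm.trans h') (hTp _ _ hb')
    · rw [← hta, ← htb, hTi (h.symm.trans h')]
  · have key : ∀ t k, ∀ i < M, ∀ a, u i = p a → a + k = r t → ∃ j < M, ∃ x,
        ((∀ i < M, x ≠ u i) ∧ ∃ a < n, u j = p a ∧
          ((a + 1 < n ∧ x = p (a + 1)) ∨ ∃ t, r t = a ∧ x = T t)) ∧ i ≤ j + k ∧ j ≤ i + k := by
      intro t k
      induction k with
      | zero =>
        intro i hi a hia hat
        refine ⟨i, hi, T t, ⟨fun j hj h => ?_, a, by have := hrn t; omega, hia,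
          Or.inr ⟨t, by omega, rfl⟩⟩, by omega, by omega⟩
        obtain ⟨b, hb, hjb⟩ := hup j hj
        exact hTp t b (by omega) (h.trans hjb)
      | succ k ih =>
        intro i hi a hia hat
        have hrt := hrn t
        by_cases hin : ∃ j < M, p (a + 1) = u j
        · obtain ⟨j, hj, hja⟩ := hin
          have hij : G.Adj (u i) (u j) := by
            rw [hia, ← hja]
            exact hadj a (by omega)
          rw [hu.2 i hi j hj] at hij
          obtain ⟨j', hj', x, hx, h1, h2⟩ := ih j hj (a + 1) hja.symm (by omega)
          exact ⟨j', hj', x, hx, by omega, by omega⟩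
        · push Not at hin
          exact ⟨i, hi, p (a + 1), ⟨hin, a, by omega, hia, Or.inl ⟨by omega, rfl⟩⟩,
            by omega, by omega⟩
    intro i hi
    obtain ⟨a, ha, hia⟩ := hup i hi
    obtain ⟨t, ht1, ht2⟩ := hdense a (by omega)
    obtain ⟨j, hj, x, hx, h1, h2⟩ := key t (r t - a) i hi a hia (by omega)
    exact ⟨j, hj, x, hx, by omega, by omega⟩

/-! ### The dense rake theorem -/

/-- For every `s`, `q` and `ℓ` there is `D = D(s,q,ℓ)` such that every graph
containing an `ℓ`-dense `D`-rake as a subgraph contains either a canonical graph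
of order at least `s` as an induced subgraph, or `K_{q,q}` as a subgraph. -/
theorem stmt_7 (s q ℓ : ℕ) : ∃ D : ℕ, ∀ (β : Type) [Fintype β] (G : SimpleGraph β),
    ContainsDenseRake G D ℓ →
    ContainsCanonical G s ∨
      ContainsSub (completeBipartiteGraph (Fin q) (Fin q)) G := by
  -- Windows of `W` vertices are long enough to contain a root in their interior and to close a
  -- hole of order at least `s` when skipped.
  set W := 2 * ℓ + s + 4 with hWdef
  obtain ⟨K, hK⟩ := anticomplete_pieces q (W + 1) 6
  obtain ⟨N, hN⟩ := exists_long_indPath q (K * W)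
  refine ⟨N + ℓ + 1, fun β _ G hrake => ?_⟩
  obtain ⟨n, r, hr, hdense, g, hg⟩ := hrake
  have hn : N + ℓ + 1 ≤ n := by simpa using Fintype.card_le_of_injective r hr
  set p : ℕ → β := fun i => g (Sum.inl ⟨min i (n - 1), by omega⟩) with hpdef
  have hpr : ∀ i : Fin n, p i = g (Sum.inl i) := fun i => by
    simp only [hpdef]
    congr 2
    exact Fin.ext (min_eq_left (by omega))
  have hp : ∀ i < n, ∀ j < n, p i = p j → i = j := by
    intro i hi j hj h
    rw [hpr ⟨i, hi⟩, hpr ⟨j, hj⟩] at h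
    simpa using hg h
  have hadj : ∀ i, i + 1 < n → G.Adj (p i) (p (i + 1)) := by
    intro i hi
    rw [hpr ⟨i, by omega⟩, hpr ⟨i + 1, hi⟩]
    refine g.map_adj ?_
    simp [rakeGraph, SimpleGraph.fromRel_adj]
  rcases hN β G p (fun i hi j hj => hp i (by omega) j (by omega))
    (fun i hi => hadj i (by omega)) with h | ⟨u, hu, hup⟩
  · exact Or.inr h
  obtain ⟨C, hC1, hC2, hC3⟩ := exists_teeth (fun t => (r t : ℕ)) (fun t => g (Sum.inr t)) hp hadj
    (fun t t' h => by simpa using hg h)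
    (fun t i hi h => by rw [hpr ⟨i, hi⟩] at h; simpa using hg h) (fun t => (r t).2)
    (fun t => by
      rw [hpr]
      refine g.map_adj ?_
      simp [rakeGraph, SimpleGraph.fromRel_adj])
    hdense hu hup (by omega)
  have hW : ∀ a c, a < c → a * W + W ≤ c * W := fun a c hac => by
    rw [← Nat.succ_mul]
    exact Nat.mul_le_mul_right W hac
  have hteeth : ∀ a, ∃ (j : ℕ) (x : β), a < K → C j x ∧ a * W < j ∧ j + 1 < a * W + W := by
    intro a
    by_cases ha : a < K
    · have := hW a K ha
      obtain ⟨j, hj, x, hx, h1, h2⟩ := hC3 (a * W + ℓ + 1) (by omega)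
      exact ⟨j, x, fun _ => ⟨hx, by omega, by omega⟩⟩
    · exact ⟨0, u 0, fun h => absurd h ha⟩
  choose J τ hτ using hteeth
  -- The piece of index `a` consists of the `a`-th window and its tooth `τ a`.
  rcases hK β G (fun a _ i => if (i : ℕ) < W then u (a * W + i) else τ a) (by
    intro a b c d i hab hbc hcd hd h
    have h1 := hW a c (by omega)
    have h2 := hW c K (by omega)
    by_cases hi : (i : ℕ) < W
    · simp only [hi, if_true] at h
      have := hu.1 _ (by omega) _ (by omega) h
      omega
    · simp only [hi, if_false] at h
      have ha := hτ a (by omega)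
      have hc := hτ c (by omega)
      have := hC2 _ (by omega) _ (by omega) _ ha.1 (h ▸ hc.1)
      omega) with h | ⟨S, hS1, hS2, hS3⟩
  · exact Or.inr h
  left
  by_contra hcan
  have h02 := hS1 0 2 (by omega) (by omega)
  have h24 := hS1 2 4 (by omega) (by omega)
  have h4K := hS2 4 (by omega)
  have hW02 := hW _ _ h02
  have hW24 := hW _ _ h24
  have hW4K := hW _ _ h4K
  have hl := hτ (S 0) (by omega)
  have hr := hτ (S 4) (by omega)
  have hlC := hC1 _ _ hl.1
  have hrC := hC1 _ _ hr.1
  have hlgap : ∀ i, S 2 * W ≤ i → i < S 2 * W + W → ¬ G.Adj (τ (S 0)) (u i) := by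
    intro i hi hi'
    have := hS3 0 1 2 3 (by omega) (by omega) (by omega) (by omega) ⟨W, by omega⟩
      ⟨i - S 2 * W, by omega⟩
    simpa [show i - S 2 * W < W by omega, show S 2 * W + (i - S 2 * W) = i by omega] using this
  have hrgap : ∀ i, S 2 * W ≤ i → i < S 2 * W + W → ¬ G.Adj (τ (S 4)) (u i) := by
    intro i hi hi' h
    have := hS3 2 3 4 5 (by omega) (by omega) (by omega) (by omega)
      ⟨i - S 2 * W, by omega⟩ ⟨W, by omega⟩
    simp only [show i - S 2 * W < W by omega, show S 2 * W + (i - S 2 * W) = i by omega,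
      if_true, lt_irrefl, if_false] at this
    exact this h.symm
  have hlr : ¬ G.Adj (τ (S 0)) (τ (S 4)) := by
    have := hS3 0 1 4 5 (by omega) (by omega) (by omega) (by omega) ⟨W, by omega⟩ ⟨W, by omega⟩
    simpa using this
  have hne : τ (S 0) ≠ τ (S 4) := fun h => by
    have := hC2 _ (by omega) _ (by omega) _ hl.1 (h ▸ hr.1)
    omega
  -- As there are no long holes, the neighbours of either tooth stay on one side of the window.
  have hlside : ∀ i < K * W, S 2 * W ≤ i → ¬ G.Adj (τ (S 0)) (u i) := by
    intro i hi hi' h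
    by_cases hiW : i < S 2 * W + W
    · exact hlgap i hi' hiW h
    · exact hcan (hole_of_gap hu (τ (S 0)) hlC.2 (x := J (S 0)) (by omega) (not_lt.mp hiW) hi
        (by omega) hlgap hlC.1 h)
  have hrside : ∀ i < S 2 * W + W, ¬ G.Adj (τ (S 4)) (u i) := by
    intro i hi h
    by_cases hiW : S 2 * W ≤ i
    · exact hrgap i hiW hi h
    · exact hcan (hole_of_gap hu (τ (S 4)) hrC.2 (y := J (S 4)) (not_le.mp hiW) (by omega)
        (by omega) (by omega) hrgap h hrC.1)
  obtain ⟨a, ha1, ha2, ha, hla⟩ := exists_last (fun i => G.Adj (τ (S 0)) (u i)) (J (S 0))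
    (S 2 * W) (by omega) hlC.1
  obtain ⟨c, hc1, hc2, hc, hfc⟩ := exists_first (fun i => G.Adj (τ (S 4)) (u i))
    (S 2 * W + W) (J (S 4)) (by omega) hrC.1
  have hac : a - 1 + (c - a + 1) = c := by omega
  refine hcan (canonical_of_two_teeth (m := c - a + 1) (by omega) (by omega)
    (hu.shift (a - 1) (c - a + 1 + 2) (by omega)) (τ (S 0)) (τ (S 4))
    (fun i hi => hlC.2 _ (by omega)) (fun i hi => hrC.2 _ (by omega)) ?_ ?_ ?_ ?_ hne hlr)
  · rwa [Nat.sub_add_cancel (by omega)]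
  · intro i hi hi' h
    by_cases h1 : a - 1 + i < S 2 * W
    · exact hla _ (by omega) h1 h
    · exact hlside _ (by omega) (not_lt.mp h1) h
  · rwa [hac]
  · intro i hi h
    by_cases h1 : a - 1 + i < S 2 * W + W
    · exact hrside _ h1 h
    · exact hfc _ (not_lt.mp h1) (by omega) h
end

section
/- Let H be a graph whose vertex set admits a partition into 2k pairwise disjoint nonempty sets V_1, …, V_k, V'_1, …, V'_k such that each of the induced subgraphs H[V_i] and H[V'_i] is connected for every i ∈ {1,…,k}, for each i ∈ {1,…,k−1} there is at least one edge with one endpoint in V_i and the other in V_{i+1}, and for each i ∈ {1,…,k} there is at least one edge with one endpoint in V_i and the other in V'_i. Then H contains a k-rake as a (not necessarily induced) subgraph. -/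
/-!
Inside each `V i` fix an entry vertex, joined to the exit vertex of the previous part, and an exit
vertex, joined to the entry vertex of the next part. A path `P i` of `H[V i]` from entry to exit
exists by connectivity, and the concatenation of the `P i` is a path of `H`, the base of the rake.
Some edge leaves `P i` inside `V i ∪ V' i` (`exists_tooth`): either the end in `V i` of an edge
from `V i` to `V' i` lies on `P i`, or a walk in `V i` from `P i` to that end has to leave `P i`.
The end of the leaving edge outside `P i` is a tooth. Since the sets `V i ∪ V' i` are pairwise
disjoint, the teeth are distinct, lie off the base, and have distinct roots.
-/

open SimpleGraph

theorem exists_path_list {α : Type} (H : SimpleGraph α) (V : Set α)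
    (hc : (H.induce V).Connected) {a b : α} (ha : a ∈ V) (hb : b ∈ V) :
    ∃ P : List α, P.IsChain H.Adj ∧ P.Nodup ∧ (∀ x ∈ P, x ∈ V) ∧
      P.head? = some a ∧ P.getLast? = some b := by
  obtain ⟨p, hp⟩ := (hc.preconnected ⟨a, ha⟩ ⟨b, hb⟩).exists_isPath
  refine ⟨p.support.map Subtype.val, ?_, ?_, ?_, ?_, ?_⟩
  · rw [List.isChain_map]
    exact p.isChain_adj_support
  · exact hp.support_nodup.map Subtype.val_injective
  · intro x hx
    obtain ⟨y, -, rfl⟩ := List.mem_map.1 hx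
    exact y.2
  · rw [List.head?_map, List.head?_eq_some_head p.support_ne_nil]
    simp
  · rw [List.getLast?_map, List.getLast?_eq_some_getLast p.support_ne_nil]
    simp

/-- A nonempty list of vertices of `V` has an edge leaving it, whose other end lies in `V` or in
the set `V'` attached to it by an edge. -/
theorem exists_tooth {α : Type} (H : SimpleGraph α) (V V' : Set α)
    (hc : (H.induce V).Connected) (hd : Disjoint V V')
    (ht : ∃ a ∈ V, ∃ b ∈ V', H.Adj a b)
    (P : List α) (hP : ∀ x ∈ P, x ∈ V) {x : α} (hx : x ∈ P) :
    ∃ r ∈ P, ∃ w, w ∉ P ∧ (w ∈ V ∨ w ∈ V') ∧ H.Adj w r := by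
  obtain ⟨a, ha, b, hb, hab⟩ := ht
  by_cases haP : a ∈ P
  · exact ⟨a, haP, b, fun h => Set.disjoint_left.1 hd (hP _ h) hb, Or.inr hb, hab.symm⟩
  · obtain ⟨p⟩ := hc.preconnected ⟨x, hP x hx⟩ ⟨a, ha⟩
    obtain ⟨d, -, h1, h2⟩ := p.exists_boundary_dart {y | y.val ∈ P} hx haP
    exact ⟨d.fst.val, h1, d.snd.val, h2, Or.inl d.snd.2, (SimpleGraph.comap_adj.1 d.adj).symm⟩

/-- A path given as a list `L`, with distinct teeth `w` off `L` attached at distinct roots `r`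
on `L`, is a rake. -/
theorem containsRake_of_list {α : Type} (H : SimpleGraph α) (k : ℕ) (L : List α)
    (hL : L.IsChain H.Adj) (hn : L.Nodup) (r w : Fin k → α) (hr : ∀ i, r i ∈ L)
    (hrinj : Function.Injective r) (hw : ∀ i, w i ∉ L) (hwinj : Function.Injective w)
    (hadj : ∀ i, H.Adj (w i) (r i)) : ContainsRake H k := by
  choose s hs using fun i => List.get_of_mem (hr i)
  refine ⟨L.length, s, ?_, ⟨Sum.elim L.get w, ?_⟩, ?_⟩
  · intro i j hij
    apply hrinj
    rw [← hs i, ← hs j, hij]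
  · have key : ∀ i j : Fin L.length, (i : ℕ) + 1 = j → H.Adj (L.get i) (L.get j) := by
      rintro ⟨i, hi⟩ ⟨j, hj⟩ h
      obtain rfl : i + 1 = j := h
      exact List.isChain_iff_getElem.1 hL i hj
    have key2 : ∀ t i, s t = i → H.Adj (w t) (L.get i) := by
      rintro t i rfl
      rw [hs]
      exact hadj t
    rintro (i | t) (j | u) h <;> obtain ⟨-, h | h⟩ := (SimpleGraph.fromRel_adj _ _ _).1 h
    · exact key _ _ h
    · exact (key _ _ h).symm
    · exact h.elim
    · exact (key2 _ _ h).symm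
    · exact key2 _ _ h
    · exact h.elim
    · exact h.elim
    · exact h.elim
  · refine Function.Injective.sumElim (List.nodup_iff_injective_get.1 hn) hwinj ?_
    intro i t h
    exact hw t (h ▸ L.get_mem i)

/-- If the vertex set of `H` is partitioned into `2k` pairwise disjoint nonempty
sets `V_1, …, V_k, V'_1, …, V'_k` inducing connected subgraphs, with an edge
between `V_i` and `V_{i+1}` for each `i < k` and an edge between `V_i` and `V'_i`
for each `i`, then `H` contains a `k`-rake as a subgraph. -/
theorem stmt_8 (α : Type) [Fintype α] (H : SimpleGraph α) (k : ℕ)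
    (V V' : Fin k → Set α)
    (hVne : ∀ i, (V i).Nonempty) (hV'ne : ∀ i, (V' i).Nonempty)
    (hVd : ∀ i j, i ≠ j → Disjoint (V i) (V j))
    (hV'd : ∀ i j, i ≠ j → Disjoint (V' i) (V' j))
    (hVV'd : ∀ i j, Disjoint (V i) (V' j))
    (hcover : ∀ x : α, (∃ i, x ∈ V i) ∨ (∃ i, x ∈ V' i))
    (hVconn : ∀ i, (H.induce (V i)).Connected)
    (hV'conn : ∀ i, (H.induce (V' i)).Connected)
    (hnext : ∀ i : Fin k, (h : (i : ℕ) + 1 < k) →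
      ∃ a ∈ V i, ∃ b ∈ V ⟨(i : ℕ) + 1, h⟩, H.Adj a b)
    (htooth : ∀ i : Fin k, ∃ a ∈ V i, ∃ b ∈ V' i, H.Adj a b) :
    ContainsRake H k := by
  classical
  choose f hf g hg hfg using hnext
  obtain ⟨ex, hexV, hex⟩ : ∃ ex : Fin k → α, (∀ i, ex i ∈ V i) ∧
      ∀ (i : Fin k) (h : (i : ℕ) + 1 < k), ex i = f i h := by
    refine ⟨fun i => if h : (i : ℕ) + 1 < k then f i h else (hVne i).some, ?_, ?_⟩
    · intro i
      dsimp only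
      split_ifs with h
      · exact hf i h
      · exact (hVne i).some_mem
    · intro i h
      simp [h]
  obtain ⟨en, henV, hen⟩ : ∃ en : Fin k → α, (∀ i, en i ∈ V i) ∧
      ∀ (i : Fin k) (h : (i : ℕ) + 1 < k), en ⟨(i : ℕ) + 1, h⟩ = g i h := by
    have : ∀ j : Fin k, ∃ x ∈ V j, ∀ (i : Fin k) (h : (i : ℕ) + 1 < k),
        j = ⟨(i : ℕ) + 1, h⟩ → x = g i h := by
      rintro ⟨j, hj⟩
      rcases j with _ | j
      · exact ⟨_, (hVne _).some_mem, fun i h e => by simp at e⟩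
      · refine ⟨_, hg ⟨j, by omega⟩ hj, ?_⟩
        rintro ⟨i, hi⟩ h e
        obtain rfl : j = i := by simpa using e
        rfl
    choose en h1 h2 using this
    exact ⟨en, h1, fun i h => h2 _ i h rfl⟩
  choose P hPc hPn hPV hPh hPl using fun i => exists_path_list H (V i) (hVconn i) (henV i) (hexV i)
  choose r hrP w hwP hwV hwr using fun i => exists_tooth H (V i) (V' i) (hVconn i) (hVV'd i i)
    (htooth i) (P i) (hPV i) (List.mem_of_mem_head? (hPh i))
  have hV : ∀ {i j x}, x ∈ V i → x ∈ V j → i = j := fun {i j x} h1 h2 => by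
    by_contra h
    exact Set.disjoint_left.1 (hVd i j h) h1 h2
  have hV' : ∀ {i j x}, x ∈ V' i → x ∈ V' j → i = j := fun {i j x} h1 h2 => by
    by_contra h
    exact Set.disjoint_left.1 (hV'd i j h) h1 h2
  have hVV' : ∀ {i j x}, x ∈ V i → x ∉ V' j := fun {i j x} h1 h2 =>
    Set.disjoint_left.1 (hVV'd i j) h1 h2
  refine containsRake_of_list H k (List.ofFn P).flatten ?_ ?_ r w ?_ ?_ ?_ ?_ hwr
  · rw [List.isChain_flatten]
    · refine ⟨?_, ?_⟩
      · intro l hl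
        obtain ⟨i, rfl⟩ := List.mem_ofFn.1 hl
        exact hPc i
      · rw [List.isChain_iff_getElem]
        intro i hi x hx y hy
        have hk : i + 1 < k := by simpa using hi
        rw [List.getElem_ofFn, hPl, Option.mem_some_iff] at hx
        rw [List.getElem_ofFn, hPh, Option.mem_some_iff] at hy
        subst hx hy
        rw [hex ⟨i, by omega⟩ hk, hen ⟨i, by omega⟩ hk]
        exact hfg _ _
    · intro h
      obtain ⟨i, hi⟩ := List.mem_ofFn.1 h
      have := hPh i
      simp [hi] at this
  · rw [List.nodup_flatten]
    refine ⟨?_, ?_⟩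
    · intro l hl
      obtain ⟨i, rfl⟩ := List.mem_ofFn.1 hl
      exact hPn i
    · rw [List.pairwise_ofFn]
      intro i j hij x hi hj
      exact hij.ne (hV (hPV i x hi) (hPV j x hj))
  · intro i
    exact List.mem_flatten.2 ⟨P i, List.mem_ofFn.2 ⟨i, rfl⟩, hrP i⟩
  · intro i j h
    exact hV (hPV i _ (hrP i)) (h ▸ hPV j _ (hrP j))
  · intro i h
    obtain ⟨l, hl, hwl⟩ := List.mem_flatten.1 h
    obtain ⟨j, rfl⟩ := List.mem_ofFn.1 hl
    rcases hwV i with h1 | h1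
    · obtain rfl := hV h1 (hPV j _ hwl)
      exact hwP _ hwl
    · exact hVV' (hPV j _ hwl) h1
  · intro i j h
    have h2 := hwV j
    rw [← h] at h2
    rcases hwV i with h1 | h1 <;> rcases h2 with h2 | h2
    · exact hV h1 h2
    · exact (hVV' h1 h2).elim
    · exact (hVV' h2 h1).elim
    · exact hV' h1 h2
end

section
/- Let G be a graph, let M_1, …, M_q be pairwise disjoint vertex subsets of G each of size s, and let T be a set of at least (q−1)·s^q + 1 vertices of G disjoint from M_1 ∪ … ∪ M_q such that every vertex of T has at least one neighbour in each of the sets M_1, …, M_q. Then G contains the complete bipartite graph K_{q,q} as a (not necessarily induced) subgraph. -/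
/-! The argument is a pigeonhole. Choose for each vertex of `T` a neighbour in every `M i`. Such a
choice is a point of the product of the `M i`, which has `s ^ q` elements, so some `y` in it is
chosen by more than `q - 1` vertices of `T`. Any `q` of these vertices are adjacent to every `y j`,
and the `y j` are distinct because the `M i` are disjoint. The two sides of the resulting `K_{q,q}`
are disjoint because adjacent vertices are distinct. -/

open SimpleGraph

/-- If `M_1, …, M_q` are pairwise disjoint vertex sets of size `s` and `T` is a
set of at least `(q-1)·s^q + 1` vertices, disjoint from all the `M_i`, each of
whose vertices has a neighbour in every `M_i`, then `G` contains `K_{q,q}` as a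
subgraph. -/
theorem stmt_9 (β : Type) [Fintype β] (G : SimpleGraph β) (q s : ℕ)
    (M : Fin q → Finset β) (T : Finset β)
    (hcard : ∀ i, (M i).card = s)
    (hMd : ∀ i j, i ≠ j → Disjoint (M i) (M j))
    (hTd : ∀ i, Disjoint T (M i))
    (hT : (q - 1) * s ^ q + 1 ≤ T.card)
    (hnbr : ∀ v ∈ T, ∀ i, ∃ u ∈ M i, G.Adj v u) :
    ContainsSub (completeBipartiteGraph (Fin q) (Fin q)) G := by
  classical
  choose! f hfM hfG using hnbr
  -- `f v` selects one neighbour of `v` in each `M i`; there are `s ^ q` possible selections.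
  obtain ⟨y, hy, hlt⟩ := Finset.exists_lt_card_fiber_of_mul_lt_card_of_maps_to
    (s := T) (t := Fintype.piFinset M) (f := f) (n := q - 1)
    (fun v hv => Fintype.mem_piFinset.2 (hfM v hv))
    (by rw [Fintype.card_piFinset]; simp only [hcard, Finset.prod_const, Finset.card_univ,
          Fintype.card_fin]; rw [mul_comm]; omega)
  rw [Fintype.mem_piFinset] at hy
  have hle : Fintype.card (Fin q) ≤ Fintype.card {v // v ∈ T.filter (fun v => f v = y)} := by
    rw [Fintype.card_fin, Fintype.card_coe]; omega
  obtain ⟨e⟩ := Function.Embedding.nonempty_of_card_le hle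
  have heT : ∀ i, (e i : β) ∈ T := fun i => (Finset.mem_filter.1 (e i).2).1
  have hadj : ∀ i j, G.Adj (e i) (y j) := fun i j => by
    have h := hfG (e i) (heT i) j
    rwa [(Finset.mem_filter.1 (e i).2).2] at h
  refine ⟨⟨Sum.elim (fun i => (e i : β)) y, ?_⟩, ?_⟩
  · rintro (a | a) (b | b) hab
    · simp at hab
    · exact hadj a b
    · exact (hadj b a).symm
    · simp at hab
  · refine Function.Injective.sumElim (Subtype.val_injective.comp e.injective) ?_ ?_
    · intro i j hij
      by_contra hne
      exact Finset.disjoint_left.1 (hMd i j hne) (hy i) (hij ▸ hy j)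
    · exact fun i j => (hadj i j).ne
end

section
/- If a class X of finite graphs is closed under taking induced subgraphs and is well-quasi-ordered by the induced subgraph relation, then there exists a number s such that no graph in X contains a canonical graph of order at least s as an induced subgraph. -/
/-!
The holes form an antichain, and so do the H-graphs of each of the three kinds. If graphs of `X`
contained canonical graphs of unbounded order, then one of these four families would have infinitely
many members occurring as induced subgraphs of graphs in `X`; as `X` is hereditary, isomorphic
copies of them would be an infinite antichain inside `X` (`bounded_of_antichain`).

*Holes* (`cycle_embedding_eq`). Suppose `C_m` embeds in `C_n`. Every vertex of the image has two
neighbours in the image, which are all of its neighbours, so the image is closed under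
`v ↦ v + 1` and hence is everything; thus `m = n`.

*H-graphs* (`hGraph_embedding_eq`). Only the two ends of the body can have degree at least `3`, and
they do have it when the body has at least two vertices. So an embedding of an H-graph with
body length `m` in one with body length `n` maps the body ends to the body ends. A path joining the
ends of the larger body has at least `n` vertices, so `n ≤ m`; and `m ≤ n` by counting vertices.
-/


open SimpleGraph

/-- A class of finite graphs, represented by its members on the vertex sets `Fin n`. -/
abbrev GraphClass := Set (Σ n : ℕ, SimpleGraph (Fin n))

/-- A class is hereditary if it is closed under taking induced subgraphs. -/
def HereditaryClass (X : GraphClass) : Prop :=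
  ∀ G ∈ X, ∀ (m : ℕ) (H : SimpleGraph (Fin m)), Nonempty (H ↪g G.2) → (⟨m, H⟩ : Σ n, SimpleGraph (Fin n)) ∈ X

/-- A family of graphs is an antichain for the induced subgraph relation if no
member embeds into a different member. -/
def IsGraphAntichain (A : GraphClass) : Prop :=
  ∀ G ∈ A, ∀ H ∈ A, G ≠ H → IsEmpty (G.2 ↪g H.2)

/-- A class is well-quasi-ordered by the induced subgraph relation if it
contains no infinite antichain. -/
def WqoByInducedSubgraphs (X : GraphClass) : Prop :=
  ¬ ∃ A : GraphClass, A ⊆ X ∧ A.Infinite ∧ IsGraphAntichain A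

/-- A family of finite graphs, indexed by their order, whose members of order at least `4` are
pairwise incomparable has only members of bounded order inside a hereditary wqo class. -/
theorem bounded_of_antichain (X : GraphClass) (hher : HereditaryClass X)
    (hwqo : WqoByInducedSubgraphs X) {V : ℕ → Type} [∀ n, Fintype (V n)]
    (K : ∀ n, SimpleGraph (V n))
    (hK : ∀ m n, 4 ≤ m → 4 ≤ n → Nonempty (K m ↪g K n) → m = n) :
    ∃ s : ℕ, ∀ n, s ≤ n → ∀ G ∈ X, ¬ ContainsInd (K n) G.2 := by
  by_contra! hcon
  let S : Set ℕ := {n | 4 ≤ n ∧ ∃ G ∈ X, ContainsInd (K n) G.2}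
  have hS : S.Infinite := by
    refine Set.infinite_of_not_bddAbove ?_
    rintro ⟨b, hb⟩
    obtain ⟨n, hn, G, hG, hc⟩ := hcon (b + 5)
    have := hb (show n ∈ S from ⟨by omega, G, hG, hc⟩)
    omega
  -- the copy of `K n` on an initial segment of `ℕ`
  let rep : ℕ → Σ n : ℕ, SimpleGraph (Fin n) := fun n =>
    ⟨Fintype.card (V n), (K n).overFin rfl⟩
  have iso : ∀ n, K n ≃g (rep n).2 := fun n => (K n).overFinIso rfl
  have key : ∀ m ∈ S, ∀ n ∈ S, Nonempty ((rep m).2 ↪g (rep n).2) → m = n := by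
    rintro m hm n hn ⟨e⟩
    exact hK m n hm.1 hn.1
      ⟨((iso n).symm.toEmbedding.comp e).comp (iso m).toEmbedding⟩
  refine hwqo ⟨rep '' S, ?_, ?_, ?_⟩
  · rintro _ ⟨n, ⟨_, G, hG, ⟨e⟩⟩, rfl⟩
    exact hher G hG _ _ ⟨e.comp (iso n).symm.toEmbedding⟩
  · refine hS.image fun m hm n hn h => key m hm n hn ?_
    rw [h]
    exact ⟨SimpleGraph.Embedding.refl⟩
  · rintro _ ⟨m, hm, rfl⟩ _ ⟨n, hn, rfl⟩ hne
    by_contra h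
    rw [not_isEmpty_iff] at h
    exact hne (by rw [key m hm n hn h])

theorem cycle_embedding_eq (m n : ℕ) (hm : 4 ≤ m) (hn : 4 ≤ n)
    (h : Nonempty (cycleGraph m ↪g cycleGraph n)) : m = n := by
  obtain ⟨f⟩ := h
  obtain ⟨m, rfl⟩ : ∃ k, m = k + 4 := ⟨m - 4, by omega⟩
  obtain ⟨n, rfl⟩ : ∃ k, n = k + 4 := ⟨n - 4, by omega⟩
  have hle : m + 4 ≤ n + 4 := by simpa using Fintype.card_le_of_injective f f.injective
  -- `f (i + 1)` and `f (i - 1)` are two distinct neighbours of `f i`, so one of them is `f i + 1`.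
  have hstep : ∀ i : Fin (m + 4), ∃ j, f j = f i + 1 := by
    intro i
    have h1 : (cycleGraph (n + 4)).Adj (f i) (f (i + 1)) :=
      f.map_adj_iff.2 (cycleGraph_adj.2 (Or.inr (by abel)))
    have h2 : (cycleGraph (n + 4)).Adj (f i) (f (i - 1)) :=
      f.map_adj_iff.2 (cycleGraph_adj.2 (Or.inl (by abel)))
    have hne : f (i + 1) ≠ f (i - 1) := by
      intro h
      have h := f.injective h
      have h2 : (1 : Fin (m + 4)) + 1 = 0 := by
        calc (1 : Fin (m + 4)) + 1 = (i + 1) - (i - 1) := by abel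
          _ = 0 := by rw [h, sub_self]
      have := congrArg Fin.val h2
      simp only [Fin.val_add, Fin.val_one, Fin.val_zero] at this
      rw [Nat.mod_eq_of_lt (by omega)] at this
      omega
    rw [cycleGraph_adj] at h1 h2
    rcases h1 with h1 | h1
    · rcases h2 with h2 | h2
      · exact absurd (sub_right_injective (h1.trans h2.symm)) hne
      · exact ⟨i - 1, by rw [← h2]; abel⟩
    · exact ⟨i + 1, by rw [← h1]; abel⟩
  have hall : ∀ k : ℕ, ∃ j, (f j).val = ((f 0).val + k) % (n + 4) := by
    intro k
    induction k with
    | zero => exact ⟨0, (Nat.mod_eq_of_lt (f 0).isLt).symm⟩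
    | succ k ih =>
      obtain ⟨j, hj⟩ := ih
      obtain ⟨j', hj'⟩ := hstep j
      refine ⟨j', ?_⟩
      rw [hj', Fin.val_add, hj, Fin.val_one, Nat.mod_add_mod, Nat.add_assoc]
  have hsurj : Function.Surjective f := by
    intro v
    obtain ⟨j, hj⟩ := hall (v.val + (n + 4) - (f 0).val)
    refine ⟨j, Fin.ext ?_⟩
    have h0 := (f 0).isLt
    rw [hj, show (f 0).val + (v.val + (n + 4) - (f 0).val) = v.val + (n + 4) by omega,
      Nat.add_mod_right, Nat.mod_eq_of_lt v.isLt]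
  have : n + 4 ≤ m + 4 := by simpa using Fintype.card_le_of_surjective f hsurj
  omega

/-- The horizontal position of a vertex of an H-graph: the index of a body vertex, and for a wing
the index of the body vertex carrying it. -/
def hPos (n : ℕ) : Fin n ⊕ Fin 4 → ℕ
  | Sum.inl i => i
  | Sum.inr w => if (w : ℕ) < 2 then 0 else n - 1

/-- Adjacent vertices are at positions differing by at most one. -/
theorem hPos_adj {n : ℕ} {lt rt : Prop} {u v : Fin n ⊕ Fin 4}
    (h : (hGraph n lt rt).Adj u v) : hPos n v ≤ hPos n u + 1 ∧ hPos n u ≤ hPos n v + 1 := by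
  rcases u with i | w <;> rcases v with j | w' <;>
    simp only [hGraph, SimpleGraph.fromRel_adj, false_or, or_false] at h <;> simp only [hPos] <;>
    (try split_ifs) <;> omega

/-- Only the two ends of the body can have three distinct neighbours. -/
theorem hGraph_branch {n : ℕ} {lt rt : Prop} {v a b c : Fin n ⊕ Fin 4}
    (ha : (hGraph n lt rt).Adj v a) (hb : (hGraph n lt rt).Adj v b)
    (hc : (hGraph n lt rt).Adj v c) (hab : a ≠ b) (hac : a ≠ c) (hbc : b ≠ c) :
    ∃ i : Fin n, v = Sum.inl i ∧ ((i : ℕ) = 0 ∨ (i : ℕ) + 1 = n) := by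
  rcases v with i | w
  · refine ⟨i, rfl, ?_⟩
    rcases a with a | a <;> rcases b with b | b <;> rcases c with c | c <;>
      simp only [hGraph, SimpleGraph.fromRel_adj, ne_eq, Sum.inl.injEq, Sum.inr.injEq,
        reduceCtorEq, Fin.ext_iff, false_or, not_false_eq_true, true_and] at ha hb hc hab hac hbc <;> omega
  · exfalso
    rcases a with a | a <;> rcases b with b | b <;> rcases c with c | c <;>
      simp only [hGraph, SimpleGraph.fromRel_adj, ne_eq, Sum.inl.injEq, Sum.inr.injEq,
        reduceCtorEq, Fin.ext_iff, or_false, not_false_eq_true, true_and] at ha hb hc hab hac hbc <;> omega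

theorem hGraph_embedding_eq (m n : ℕ) (lt rt lt' rt' : Prop) (hm : 4 ≤ m)
    (h : Nonempty (hGraph m lt rt ↪g hGraph n lt' rt')) : m = n := by
  obtain ⟨f⟩ := h
  have hle : m ≤ n := by simpa using Fintype.card_le_of_injective f f.injective
  -- Each end of the body has two wings and one further body vertex as neighbours.
  have hfirst : ∃ i : Fin n, f (Sum.inl ⟨0, by omega⟩) = Sum.inl i ∧
      ((i : ℕ) = 0 ∨ (i : ℕ) + 1 = n) := by
    refine hGraph_branch (a := f (Sum.inr 0)) (b := f (Sum.inr 1))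
      (c := f (Sum.inl ⟨1, by omega⟩))
      (f.map_adj_iff.2 ?_) (f.map_adj_iff.2 ?_) (f.map_adj_iff.2 ?_)
      (f.injective.ne ?_) (f.injective.ne ?_) (f.injective.ne ?_) <;>
    simp [hGraph, SimpleGraph.fromRel_adj]
  have hlast : ∃ i : Fin n, f (Sum.inl ⟨m - 1, by omega⟩) = Sum.inl i ∧
      ((i : ℕ) = 0 ∨ (i : ℕ) + 1 = n) := by
    refine hGraph_branch (a := f (Sum.inr 2)) (b := f (Sum.inr 3))
      (c := f (Sum.inl ⟨m - 2, by omega⟩))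
      (f.map_adj_iff.2 ?_) (f.map_adj_iff.2 ?_) (f.map_adj_iff.2 ?_)
      (f.injective.ne ?_) (f.injective.ne ?_) (f.injective.ne ?_) <;>
    simp [hGraph, SimpleGraph.fromRel_adj] <;> omega
  obtain ⟨i, hi, hi'⟩ := hfirst
  obtain ⟨j, hj, hj'⟩ := hlast
  have hij : (i : ℕ) ≠ j := by
    intro h
    have h := f.injective (hi.trans ((congrArg Sum.inl (Fin.ext h)).trans hj.symm))
    simp at h
    omega
  -- The image of the body starts at position `i` and moves by at most one at each step, so reaching
  -- the other end `j` takes at least `n - 1` steps.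
  have hwalk : ∀ k (hk : k < m), hPos n (f (Sum.inl ⟨k, hk⟩)) ≤ i + k ∧
      (i : ℕ) ≤ hPos n (f (Sum.inl ⟨k, hk⟩)) + k := by
    intro k
    induction k with
    | zero => intro hk; rw [hi]; simp [hPos]
    | succ k ih =>
      intro hk
      have h1 := ih (by omega)
      have h2 := hPos_adj (f.map_adj_iff.2 (show (hGraph m lt rt).Adj
        (Sum.inl ⟨k, by omega⟩) (Sum.inl ⟨k + 1, hk⟩) by simp [hGraph, SimpleGraph.fromRel_adj]))
      omega
  have := hwalk (m - 1) (by omega)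
  rw [hj] at this
  simp only [hPos] at this
  omega

/-- If a hereditary class of finite graphs is well-quasi-ordered by the induced
subgraph relation, then there is an `s` such that no graph of the class contains
a canonical graph of order at least `s` as an induced subgraph. -/
theorem stmt_11 (X : GraphClass) (hher : HereditaryClass X)
    (hwqo : WqoByInducedSubgraphs X) :
    ∃ s : ℕ, ∀ G ∈ X, ¬ ContainsCanonical G.2 s := by
  obtain ⟨s₀, h₀⟩ := bounded_of_antichain X hher hwqo (fun n => cycleGraph n) cycle_embedding_eq
  have hH : ∀ t : Fin 3, ∃ s : ℕ, ∀ n, s ≤ n → ∀ G ∈ X, ¬ ContainsInd (hGraphT n t) G.2 :=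
    fun t => bounded_of_antichain X hher hwqo (fun n => hGraphT n t)
      fun m n hm _ h => hGraph_embedding_eq m n _ _ _ _ hm h
  choose s hs using hH
  refine ⟨s₀ + ∑ t, s t, fun G hG hc => ?_⟩
  rcases hc with ⟨n, -, hn, hc⟩ | ⟨m, -, hm, t, hc⟩
  · exact h₀ n (by omega) G hG hc
  · have : s t ≤ ∑ t, s t := Finset.single_le_sum (fun _ _ => Nat.zero_le _) (Finset.mem_univ t)
    exact hs t m (by omega) G hG hc
end
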